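/- Let K be a totally imaginary number field of degree n. Then for every positive integer c ≤ n/2 − 1 there exists a c-hyperbolic unit μ ∈ U_K. -/

import Mathlib

open NumberField Module

/-- A unit `μ` of the ring of integers of a number field `K` is `c`-hyperbolic if no
product of `k` (not necessarily distinct) values of embeddings `K → ℂ` at `μ`, for
`1 ≤ k ≤ c`, has absolute value `1`. -/
def IsCHyperbolicUnit (K : Type*) [Field K] [NumberField K] (c : ℕ) (μ : (𝓞 K)ˣ) : Prop :=
  ∀ k : ℕ, 1 ≤ k → k ≤ c → ∀ σs : Fin k → (K →+* ℂ),
    ‖∏ i, σs i ((μ : 𝓞 K) : K)‖ ≠ 1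

/-!
The absolute value of a product of embeddings is a homomorphism from the unit group to `ℝ≥0`, and
since `ℝ≥0` is torsion-free its kernel is either everything or of infinite index. By B. H. Neumann's
lemma finitely many subgroups of infinite index do not cover the unit group, so it suffices to treat
one product at a time: a product of at most `Units.rank K` embeddings misses an infinite place `w`,
and Dirichlet's unit theorem provides a unit of absolute value less than `1` at all other places.
-/

open scoped NNReal

theorem exists_forall_notMem_of_not_finiteIndex {G ι : Type*} [Group G] [Finite ι]
    (H : ι → Subgroup G) (hH : ∀ i, ¬(H i).FiniteIndex) :
    ∃ g, ∀ i, g ∉ H i := by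
  have := Fintype.ofFinite ι
  by_contra! hcover
  obtain ⟨i, -, hi⟩ := Subgroup.exists_finiteIndex_of_leftCoset_cover
    (s := Finset.univ) (g := fun _ ↦ 1) (H := H)
    (Set.eq_univ_of_forall fun g ↦ by simpa using hcover g)
  exact hH i hi

theorem eq_one_of_finiteIndex_ker {G M : Type*} [Group G] [Monoid M] [IsMulTorsionFree M]
    (f : G →* M) [f.ker.FiniteIndex] : f = 1 := by
  ext g
  obtain ⟨n, hn, -, hmem⟩ :=
    Subgroup.exists_pow_mem_of_index_ne_zero (Subgroup.FiniteIndex.index_ne_zero (H := f.ker)) g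
  refine pow_left_injective hn.ne' ?_
  simpa using hmem

theorem exists_forall_monoidHom_apply_ne_one {G ι : Type*} [Group G] [Finite ι]
    {M : ι → Type*} [∀ i, Monoid (M i)] [∀ i, IsMulTorsionFree (M i)]
    (f : ∀ i, G →* M i) (hf : ∀ i, f i ≠ 1) :
    ∃ g, ∀ i, f i g ≠ 1 :=
  exists_forall_notMem_of_not_finiteIndex (fun i ↦ (f i).ker) fun i _ ↦
    hf i (eq_one_of_finiteIndex_ker (f i))

section NormProd

variable {K ι : Type*} [Field K] [Fintype ι]

/-- The homomorphism `u ↦ |∏ i, σ i u|` on the units of the ring of integers. Its codomain is `ℝ≥0`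
rather than `ℝ` because `-1` is a torsion element of `ℝ`. -/
noncomputable def normProdHom (σ : ι → K →+* ℂ) : (𝓞 K)ˣ →* ℝ≥0 :=
  (nnnormHom : ℂ →*₀ ℝ≥0).toMonoidHom.comp <|
    ∏ i, ((σ i).comp (algebraMap (𝓞 K) K) : 𝓞 K →* ℂ).comp (Units.coeHom (𝓞 K))

theorem coe_normProdHom (σ : ι → K →+* ℂ) (u : (𝓞 K)ˣ) :
    (normProdHom σ u : ℝ) = ‖∏ i, σ i ((u : 𝓞 K) : K)‖ := by
  simp [normProdHom]

variable [NumberField K]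

theorem exists_unit_forall_norm_lt_one (σ : ι → K →+* ℂ)
    (hι : Fintype.card ι ≤ Units.rank K) :
    ∃ u : (𝓞 K)ˣ, ∀ i, ‖σ i ((u : 𝓞 K) : K)‖ < 1 := by
  have hcard : Fintype.card ι < Fintype.card (InfinitePlace K) :=
    Nat.lt_of_le_pred Fintype.card_pos hι
  obtain ⟨w, hw⟩ : ∃ w, ∀ i, InfinitePlace.mk (σ i) ≠ w := by
    by_contra! hsurj
    exact hcard.not_ge (Fintype.card_le_of_surjective _ hsurj)
  obtain ⟨u, hu⟩ := Units.dirichletUnitTheorem.exists_unit K w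
  refine ⟨u, fun i ↦ ?_⟩
  have hpos : 0 < InfinitePlace.mk (σ i) ((u : 𝓞 K) : K) :=
    InfinitePlace.pos_iff.2 (Units.coe_ne_zero u)
  exact (Real.log_neg_iff hpos).1 (hu _ (hw i))

theorem normProdHom_ne_one [Nonempty ι] (σ : ι → K →+* ℂ)
    (hι : Fintype.card ι ≤ Units.rank K) : normProdHom σ ≠ 1 := by
  obtain ⟨u, hu⟩ := exists_unit_forall_norm_lt_one σ hι
  have hlt : ‖∏ i, σ i ((u : 𝓞 K) : K)‖ < 1 := by
    rw [norm_prod]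
    simpa using Finset.prod_lt_prod_of_nonempty (fun i _ ↦ norm_pos_iff.2 (by simp))
      (fun i _ ↦ hu i) Finset.univ_nonempty
  intro hone
  rw [← coe_normProdHom, hone] at hlt
  simp at hlt

end NormProd

theorem finrank_le_two_mul_rank_add_one (K : Type*) [Field K] [NumberField K] :
    finrank ℚ K ≤ 2 * (Units.rank K + 1) := by
  have hpos : 0 < Fintype.card (InfinitePlace K) := Fintype.card_pos
  have hsum := InfinitePlace.card_eq_nrRealPlaces_add_nrComplexPlaces K
  have hrank := InfinitePlace.card_add_two_mul_card_eq_rank K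
  rw [Units.rank]
  lia

theorem exists_cHyperbolic_unit_of_totallyImaginary_general
    (K : Type*) [Field K] [NumberField K] (c : ℕ) (hc : c ≤ Units.rank K) :
    ∃ μ : (𝓞 K)ˣ, IsCHyperbolicUnit K c μ := by
  obtain ⟨μ, hμ⟩ := exists_forall_monoidHom_apply_ne_one
    (fun σ : (Σ k : Set.Icc 1 c, Fin k → K →+* ℂ) ↦ normProdHom σ.2) <| by
      rintro ⟨⟨k, hk, hkc⟩, σ⟩
      have : Nonempty (Fin k) := ⟨⟨0, hk⟩⟩
      exact normProdHom_ne_one σ (by simpa using hkc.trans hc)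
  refine ⟨μ, fun k hk hkc σ hnorm ↦ hμ ⟨⟨k, hk, hkc⟩, σ⟩ ?_⟩
  rwa [← coe_normProdHom, NNReal.coe_eq_one] at hnorm

/-- In a totally imaginary number field of degree `n`, there exists a `c`-hyperbolic unit
for every positive `c ≤ n / 2 - 1`. -/
theorem exists_cHyperbolic_unit_of_totallyImaginary
    (K : Type*) [Field K] [NumberField K]
    (him : IsEmpty (K →+* ℝ))
    (c : ℕ) (hc : 1 ≤ c) (hcn : 2 * (c + 1) ≤ finrank ℚ K) :
    ∃ μ : (𝓞 K)ˣ, IsCHyperbolicUnit K c μ :=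
  exists_cHyperbolic_unit_of_totallyImaginary_general K c <| by
    have hrank := finrank_le_two_mul_rank_add_one K
    lia
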